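/- The following are equivalent for a regular topological space X: (1) X has an irreducible base; (2) there is a neighbourhood assignment f on X such that D_G^f is closed and discrete in G for every open G ⊆ X; (3) there is a neighbourhood assignment f on X such that D_G^f is a discrete subspace of X for every open G ⊆ X. -/

import Mathlib

open TopologicalSpace Cardinal Set

universe u

section Defs

variable {X : Type u} [TopologicalSpace X]

/-- `B` is a neighbourhood base of `x`: members are open sets containing `x`,
and every open set containing `x` contains a member of `B`. -/
def NbhdBasisAt (B : Set (Set X)) (x : X) : Prop :=
  (∀ U ∈ B, IsOpen U ∧ x ∈ U) ∧ ∀ V : Set X, IsOpen V → x ∈ V → ∃ U ∈ B, U ⊆ V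

/-- The family `F` contains a neighbourhood base of `x`. -/
def ContainsNbhdBasisAt (F : Set (Set X)) (x : X) : Prop :=
  ∀ V : Set X, IsOpen V → x ∈ V → ∃ U ∈ F, x ∈ U ∧ U ⊆ V

/-- Property (*) of a decomposition. -/
def StarProperty (𝒲 : X → Set (Set X)) : Prop :=
  ∀ x y : X, x ≠ y → ∀ U ∈ 𝒲 x, ∀ V ∈ 𝒲 y, x ∈ V → y ∈ U → (V \ U).Nonempty

/-- `𝒰` is an irreducible decomposition of a base of `X`. -/
def IsIrreducibleDecomp (𝒰 : X → Set (Set X)) : Prop :=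
  IsTopologicalBasis (⋃ x, 𝒰 x) ∧ (∀ x, NbhdBasisAt (𝒰 x) x) ∧
    ∀ x : X, ¬ ContainsNbhdBasisAt (⋃ y ∈ {y : X | y ≠ x}, 𝒰 y) x

def HasIrreducibleBase (X : Type u) [TopologicalSpace X] : Prop :=
  ∃ 𝒰 : X → Set (Set X), IsIrreducibleDecomp 𝒰

/-- `f` is a neighbourhood assignment on `Y`. -/
def IsNbhdAssignment (Y : Set X) (f : X → Set X) : Prop :=
  ∀ y ∈ Y, IsOpen (f y) ∧ y ∈ f y

/-- `D_N^f = { y ∈ Y : y ∈ N ⊆ f y }`. -/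
def Dset (Y : Set X) (f : X → Set X) (N : Set X) : Set X :=
  {y | y ∈ Y ∧ y ∈ N ∧ N ⊆ f y}

/-- `Y` is weakly separated (as a subspace of `X`). -/
def WeaklySeparatedSub (Y : Set X) : Prop :=
  ∃ f : X → Set X, IsNbhdAssignment Y f ∧
    ∀ y ∈ Y, ∀ z ∈ Y, y ≠ z → y ∉ f z ∨ z ∉ f y

/-- `Z` is pseudo weakly separated: it contains a weakly separated subspace of the
same cardinality. -/
def PseudoWeaklySeparated (Z : Set X) : Prop :=
  ∃ W ⊆ Z, #W = #Z ∧ WeaklySeparatedSub W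

/-- The weight of a space: least cardinality of a base. -/
noncomputable def weight (X : Type u) [TopologicalSpace X] : Cardinal.{u} :=
  sInf {c | ∃ B : Set (Set X), IsTopologicalBasis B ∧ c = #B}

/-- The character of `X` at `x`: least cardinality of a neighbourhood base at `x`. -/
noncomputable def charAt (x : X) : Cardinal.{u} :=
  sInf {c | ∃ B : Set (Set X), NbhdBasisAt B x ∧ c = #B}

/-- The character of `X`. -/
noncomputable def character (X : Type u) [TopologicalSpace X] : Cardinal.{u} :=
  ⨆ x : X, charAt x

/-- `N` is a network of `X`. -/
def IsNetwork (N : Set (Set X)) : Prop :=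
  ∀ x : X, ∀ U : Set X, IsOpen U → x ∈ U → ∃ M ∈ N, x ∈ M ∧ M ⊆ U

/-- The net weight of `X`: least cardinality of a network. -/
noncomputable def netWeight (X : Type u) [TopologicalSpace X] : Cardinal.{u} :=
  sInf {c | ∃ N : Set (Set X), IsNetwork N ∧ c = #N}

/-- Tkačenko's cardinal function `R`. -/
noncomputable def Rinv (X : Type u) [TopologicalSpace X] : Cardinal.{u} :=
  sSup {c | ∃ Y : Set X, WeaklySeparatedSub Y ∧ c = #Y}

/-- `S` is right-separated: it carries a well-ordering in which every point has an
open neighbourhood avoiding all later points of `S`. -/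
def RightSeparated (S : Set X) : Prop :=
  ∃ r : S → S → Prop, IsWellOrder S r ∧
    ∀ x : S, ∃ U : Set X, IsOpen U ∧ (x : X) ∈ U ∧ ∀ y : S, r x y → (y : X) ∉ U

end Defs

/-!
Call `f` accumulation-free if no open `G` contains an accumulation point of `D_G^f`. Replacing `G`
by `G ∩ f p` shows that discreteness of all the sets `D_G^f` already gives this, and closedness in
`G` then comes for free.

Given an irreducible base, let `f x` be an open neighbourhood of `x` containing no `U` with
`x ∈ U ∈ 𝒰_y`, `y ≠ x`: a member `U ⊆ G` of `𝒰_p` then meets `D_G^f` at most in `p`.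

Conversely, shrink an accumulation-free `f` so that its values are regular open and `f x = {x}` at
isolated points `x`, and let `𝒰_y` consist of the open `V ∋ y` with `D_V^f ⊆ {y}`. For open `W ∋ y`
the set `V = W \ (D_W^f \ {y})` is open, and it is dense in `W` because no removed point is
isolated. If `V ⊆ f x` then `W ⊆ interior (closure (f x)) = f x`, so `D_V^f ⊆ D_W^f ∩ V ⊆ {y}`; thus
`V ∈ 𝒰_y`.
-/

section

open Topology Filter

theorem dset_mono_left {X : Type u} {Y : Set X} {f g : X → Set X} (hgf : ∀ x, g x ⊆ f x)
    (G : Set X) : Dset Y g G ⊆ Dset Y f G :=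
  fun x hx => ⟨hx.1, hx.2.1, hx.2.2.trans (hgf x)⟩

variable {X : Type u} [TopologicalSpace X]

theorem notMem_derivedSet_iff {S : Set X} {x : X} :
    x ∉ derivedSet S ↔ ∃ U : Set X, IsOpen U ∧ x ∈ U ∧ U ∩ S ⊆ {x} := by
  simp only [mem_derivedSet, accPt_iff_nhds, not_forall, not_exists, not_and, not_not]
  constructor
  · rintro ⟨N, hN, hNS⟩
    obtain ⟨U, hUN, hU, hxU⟩ := mem_nhds_iff.1 hN
    exact ⟨U, hU, hxU, fun y hy => hNS y ⟨hUN hy.1, hy.2⟩⟩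
  · rintro ⟨U, hU, hxU, hUS⟩
    exact ⟨U, hU.mem_nhds hxU, fun y hy => hUS hy⟩

theorem closure_inter_subset_of_disjoint_derivedSet {S W : Set X}
    (h : Disjoint W (derivedSet S)) : closure S ∩ W ⊆ S := by
  rintro x ⟨hxS, hxW⟩
  rw [closure_eq_self_union_derivedSet] at hxS
  exact hxS.resolve_right (disjoint_left.1 h hxW)

theorem isOpen_sdiff_of_disjoint_derivedSet {S W : Set X} (hW : IsOpen W)
    (h : Disjoint W (derivedSet S)) : IsOpen (W \ S) := by
  have hdiff : W \ S = W \ closure S :=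
    Subset.antisymm
      (fun _ hx => ⟨hx.1, fun hxS =>
        hx.2 (closure_inter_subset_of_disjoint_derivedSet h ⟨hxS, hx.1⟩)⟩)
      (sdiff_subset_sdiff_right subset_closure)
  exact hdiff ▸ hW.sdiff isClosed_closure

theorem subset_closure_sdiff_of_disjoint_derivedSet {S W : Set X} (hW : IsOpen W)
    (h : Disjoint W (derivedSet S)) (hS : ∀ z ∈ S, ¬IsOpen ({z} : Set X)) :
    W ⊆ closure (W \ S) := by
  intro z hzW
  by_cases hzS : z ∈ S
  · have hne : (𝓝[≠] z).NeBot := neBot_iff.2 fun hbot =>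
      hS z hzS ((isOpen_singleton_iff_punctured_nhds z).2 hbot)
    have hnotS : ∀ᶠ q in 𝓝[≠] z, q ∉ S := by
      simpa only [mem_derivedSet, accPt_iff_frequently_nhdsNE, not_frequently]
        using disjoint_left.1 h hzW
    have hmemW : ∀ᶠ q in 𝓝[≠] z, q ∈ W := nhdsWithin_le_nhds (hW.mem_nhds hzW)
    exact mem_closure_iff_frequently.2
      ((hmemW.and hnotS).frequently.filter_mono nhdsWithin_le_nhds)
  · exact subset_closure ⟨hzW, hzS⟩

/-- A regular open set, as a predicate on sets; Mathlib has only the order-theoretic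
`Heyting.IsRegular` on `Opens X`. -/
def IsRegularOpen (U : Set X) : Prop :=
  interior (closure U) = U

theorem IsRegularOpen.isOpen {U : Set X} (hU : IsRegularOpen U) : IsOpen U := by
  rw [← hU]
  exact isOpen_interior

theorem isRegularOpen_interior_closure (S : Set X) : IsRegularOpen (interior (closure S)) :=
  interior_closure_idem

theorem IsRegularOpen.subset_of_subset_closure {U V W : Set X} (hU : IsRegularOpen U)
    (hW : IsOpen W) (hWV : W ⊆ closure V) (hVU : V ⊆ U) : W ⊆ U := by
  rw [← hU]
  exact interior_maximal (hWV.trans (closure_mono hVU)) hW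

theorem isTopologicalBasis_isRegularOpen [RegularSpace X] :
    IsTopologicalBasis {U : Set X | IsRegularOpen U} := by
  refine isTopologicalBasis_of_isOpen_of_nhds (fun U hU => hU.isOpen) fun x W hxW hW => ?_
  obtain ⟨V, ⟨hxV, hV⟩, hVW⟩ := (hasBasis_opens_closure x).mem_iff.1 (hW.mem_nhds hxW)
  exact ⟨interior (closure V), isRegularOpen_interior_closure V,
    hV.subset_interior_closure hxV, interior_subset.trans hVW⟩

/-- `f` is accumulation-free if no open `G` contains an accumulation point of `D_G^f`; equivalently,
`D_G^f` is closed and discrete in every open `G`. -/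
def IsAccumulationFree (f : X → Set X) : Prop :=
  ∀ ⦃G : Set X⦄, IsOpen G → Disjoint G (derivedSet (Dset univ f G))

theorem IsAccumulationFree.mono {f g : X → Set X} (hf : IsAccumulationFree f)
    (hgf : ∀ x, g x ⊆ f x) : IsAccumulationFree g :=
  fun G hG => (hf hG).mono_right (derivedSet_mono _ _ (dset_mono_left hgf G))

theorem IsAccumulationFree.closed_and_discrete {f : X → Set X} (hf : IsAccumulationFree f)
    {G : Set X} (hG : IsOpen G) :
    closure (Dset univ f G) ∩ G ⊆ Dset univ f G ∧
      ∀ x ∈ Dset univ f G, ∃ U : Set X, IsOpen U ∧ x ∈ U ∧ U ∩ Dset univ f G ⊆ {x} :=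
  ⟨closure_inter_subset_of_disjoint_derivedSet (hf hG),
    fun _ hx => notMem_derivedSet_iff.1 (disjoint_left.1 (hf hG) hx.2.1)⟩

theorem isAccumulationFree_of_discrete {f : X → Set X} (hf : ∀ x, IsOpen (f x) ∧ x ∈ f x)
    (hdisc : ∀ G : Set X, IsOpen G → ∀ x ∈ Dset univ f G,
      ∃ U : Set X, IsOpen U ∧ x ∈ U ∧ U ∩ Dset univ f G ⊆ {x}) :
    IsAccumulationFree f := by
  refine fun G hG => disjoint_left.2 fun p hpG => notMem_derivedSet_iff.2 ?_
  obtain ⟨hfp, hp⟩ := hf p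
  obtain ⟨U, hU, hpU, hUD⟩ := hdisc (G ∩ f p) (hG.inter hfp) p
    ⟨mem_univ p, ⟨hpG, hp⟩, inter_subset_right⟩
  refine ⟨U ∩ f p, hU.inter hfp, ⟨hpU, hp⟩, ?_⟩
  rintro q ⟨⟨hqU, hqp⟩, -, hqG, hGq⟩
  exact hUD ⟨hqU, mem_univ q, ⟨hqG, hqp⟩, inter_subset_left.trans hGq⟩

theorem HasIrreducibleBase.exists_isAccumulationFree (h : HasIrreducibleBase X) :
    ∃ f : X → Set X, (∀ x, IsOpen (f x) ∧ x ∈ f x) ∧ IsAccumulationFree f := by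
  obtain ⟨𝒰, -, hbasis, hirr⟩ := h
  simp only [ContainsNbhdBasisAt, not_forall] at hirr
  choose f hf hxf hno using hirr
  refine ⟨f, fun x => ⟨hf x, hxf x⟩, fun G hG => disjoint_left.2 fun p hpG =>
    notMem_derivedSet_iff.2 ?_⟩
  obtain ⟨U, hU, hUG⟩ := (hbasis p).2 G hG hpG
  obtain ⟨hUo, hpU⟩ := (hbasis p).1 U hU
  refine ⟨U, hUo, hpU, ?_⟩
  rintro q ⟨hqU, -, -, hGq⟩
  by_contra hqp
  exact hno q ⟨U, mem_biUnion (Ne.symm hqp) hU, hqU, hUG.trans hGq⟩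

theorem exists_isRegularOpen_refinement (hX : IsTopologicalBasis {U : Set X | IsRegularOpen U})
    {f : X → Set X} (hf : ∀ x, IsOpen (f x) ∧ x ∈ f x) :
    ∃ g : X → Set X, (∀ x, IsRegularOpen (g x)) ∧ (∀ x, x ∈ g x) ∧ (∀ x, g x ⊆ f x) ∧
      ∀ x, IsOpen ({x} : Set X) → g x ⊆ {x} := by
  have hlocal (x : X) : ∃ U : Set X, IsRegularOpen U ∧ x ∈ U ∧ U ⊆ f x ∧
      (IsOpen ({x} : Set X) → U ⊆ {x}) := by
    by_cases hx : IsOpen ({x} : Set X)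
    · obtain ⟨U, hU, hxU, hUx⟩ := hX.exists_subset_of_mem_open (mem_singleton x) hx
      exact ⟨U, hU, hxU, hUx.trans (singleton_subset_iff.2 (hf x).2), fun _ => hUx⟩
    · obtain ⟨U, hU, hxU, hUf⟩ := hX.exists_subset_of_mem_open (hf x).2 (hf x).1
      exact ⟨U, hU, hxU, hUf, fun h => absurd h hx⟩
  choose g hg hxg hgf hgx using hlocal
  exact ⟨g, hg, hxg, hgf, hgx⟩

/-- The decomposition `𝒰_y` induced by `f`: the open `V ∋ y` such that no point of `V` other than
`y` has its assigned neighbourhood containing `V`. -/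
def inducedDecomp (f : X → Set X) (y : X) : Set (Set X) :=
  {V | IsOpen V ∧ y ∈ V ∧ Dset univ f V ⊆ {y}}

theorem IsAccumulationFree.nbhdBasisAt_inducedDecomp {f : X → Set X} (hf : IsAccumulationFree f)
    (hreg : ∀ x, IsRegularOpen (f x)) (hiso : ∀ x, IsOpen ({x} : Set X) → f x ⊆ {x}) (y : X) :
    NbhdBasisAt (inducedDecomp f y) y := by
  refine ⟨fun V hV => ⟨hV.1, hV.2.1⟩, fun W hW hyW => ?_⟩
  let S := Dset univ f W \ {y}
  have hS : Disjoint W (derivedSet S) :=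
    (hf hW).mono_right (derivedSet_mono _ _ sdiff_subset)
  have hS_not_isolated : ∀ z ∈ S, ¬IsOpen ({z} : Set X) := by
    rintro z ⟨⟨-, -, hWz⟩, hzy⟩ hz
    exact hzy (hiso z hz (hWz hyW)).symm
  have hdense : W ⊆ closure (W \ S) :=
    subset_closure_sdiff_of_disjoint_derivedSet hW hS hS_not_isolated
  refine ⟨W \ S, ⟨isOpen_sdiff_of_disjoint_derivedSet hW hS, ⟨hyW, fun hyS => hyS.2 rfl⟩, ?_⟩,
    sdiff_subset⟩
  rintro x ⟨-, ⟨hxW, hxS⟩, hVx⟩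
  have hWx : W ⊆ f x := (hreg x).subset_of_subset_closure hW hdense hVx
  by_contra hxy
  exact hxS ⟨⟨mem_univ x, hxW, hWx⟩, hxy⟩

theorem isIrreducibleDecomp_inducedDecomp {f : X → Set X} (hf : ∀ x, IsOpen (f x) ∧ x ∈ f x)
    (hbasis : ∀ y, NbhdBasisAt (inducedDecomp f y) y) :
    IsIrreducibleDecomp (inducedDecomp f) := by
  refine ⟨isTopologicalBasis_of_isOpen_of_nhds ?_ ?_, hbasis, fun x hx => ?_⟩
  · intro V hV
    obtain ⟨y, hVy⟩ := mem_iUnion.1 hV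
    exact hVy.1
  · intro y W hyW hW
    obtain ⟨V, hV, hVW⟩ := (hbasis y).2 W hW hyW
    exact ⟨V, mem_iUnion_of_mem y hV, hV.2.1, hVW⟩
  · obtain ⟨V, hV, hxV, hVx⟩ := hx (f x) (hf x).1 (hf x).2
    obtain ⟨y, hyx, hVy⟩ := mem_iUnion₂.1 hV
    exact hyx (hVy.2.2 ⟨mem_univ x, hxV, hVx⟩).symm

theorem IsAccumulationFree.hasIrreducibleBase
    (hX : IsTopologicalBasis {U : Set X | IsRegularOpen U}) {f : X → Set X}
    (hf : ∀ x, IsOpen (f x) ∧ x ∈ f x) (hfree : IsAccumulationFree f) :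
    HasIrreducibleBase X := by
  obtain ⟨g, hreg, hxg, hgf, hiso⟩ := exists_isRegularOpen_refinement hX hf
  exact ⟨inducedDecomp g, isIrreducibleDecomp_inducedDecomp (fun x => ⟨(hreg x).isOpen, hxg x⟩)
    ((hfree.mono hgf).nbhdBasisAt_inducedDecomp hreg hiso)⟩

theorem statement7_general (hX : IsTopologicalBasis {U : Set X | IsRegularOpen U}) :
    List.TFAE [HasIrreducibleBase X,
      ∃ f : X → Set X, (∀ x, IsOpen (f x) ∧ x ∈ f x) ∧
        ∀ G : Set X, IsOpen G →
          (closure (Dset Set.univ f G) ∩ G ⊆ Dset Set.univ f G) ∧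
          (∀ x ∈ Dset Set.univ f G,
            ∃ U : Set X, IsOpen U ∧ x ∈ U ∧ U ∩ Dset Set.univ f G ⊆ {x}),
      ∃ f : X → Set X, (∀ x, IsOpen (f x) ∧ x ∈ f x) ∧
        ∀ G : Set X, IsOpen G → ∀ x ∈ Dset Set.univ f G,
          ∃ U : Set X, IsOpen U ∧ x ∈ U ∧ U ∩ Dset Set.univ f G ⊆ {x}] := by
  tfae_have 1 → 2 := fun h =>
    let ⟨f, hf, hfree⟩ := h.exists_isAccumulationFree
    ⟨f, hf, fun _ hG => hfree.closed_and_discrete hG⟩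
  tfae_have 2 → 3 := fun ⟨f, hf, h⟩ => ⟨f, hf, fun G hG => (h G hG).2⟩
  tfae_have 3 → 1 := fun ⟨_, hf, hdisc⟩ =>
    (isAccumulationFree_of_discrete hf hdisc).hasIrreducibleBase hX hf
  tfae_finish

end

/-- for a regular (T3) space the three conditions are equivalent. -/
theorem statement7 {X : Type u} [TopologicalSpace X] [T3Space X] :
    (HasIrreducibleBase X ↔
      ∃ f : X → Set X, (∀ x, IsOpen (f x) ∧ x ∈ f x) ∧
        ∀ G : Set X, IsOpen G →
          (closure (Dset Set.univ f G) ∩ G ⊆ Dset Set.univ f G) ∧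
          (∀ x ∈ Dset Set.univ f G,
            ∃ U : Set X, IsOpen U ∧ x ∈ U ∧ U ∩ Dset Set.univ f G ⊆ {x})) ∧
    ((∃ f : X → Set X, (∀ x, IsOpen (f x) ∧ x ∈ f x) ∧
        ∀ G : Set X, IsOpen G →
          (closure (Dset Set.univ f G) ∩ G ⊆ Dset Set.univ f G) ∧
          (∀ x ∈ Dset Set.univ f G,
            ∃ U : Set X, IsOpen U ∧ x ∈ U ∧ U ∩ Dset Set.univ f G ⊆ {x})) ↔
      ∃ f : X → Set X, (∀ x, IsOpen (f x) ∧ x ∈ f x) ∧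
        ∀ G : Set X, IsOpen G → ∀ x ∈ Dset Set.univ f G,
          ∃ U : Set X, IsOpen U ∧ x ∈ U ∧ U ∩ Dset Set.univ f G ⊆ {x}) :=
  have h := statement7_general (isTopologicalBasis_isRegularOpen (X := X))
  ⟨h.out 0 1, h.out 1 2⟩
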